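/- arXiv:2511.09541 — 3 statements merged into one kernel-verified Lean document; each statement's English description precedes it below -/
import Mathlib

section
/- For all real parameters γ₁,γ₂,γ₃,γ₄ there exists a point x ∈ ℝ⁴ at which the gradients of the three functions H₄ = p₁² + p₂² + Σ_{n=1}^{4} γₙ (q₁p₁ + q₂p₂)ⁿ, C = q₁p₂ − q₂p₁, and 𝓘₄ = p₂² + γ₁ q₂p₂ + γ₂ (q₁²+q₂²) p₂² + γ₃ ( q₂³p₂³ + (q₁³+3q₁q₂²)p₂²p₁ − q₂³p₂p₁² ) + γ₄ ( (q₂⁴−q₁⁴)p₂⁴ + 4(q₁³q₂+q₁q₂³)p₂³p₁ + (q₁⁴−q₂⁴)p₂²p₁² ) are linearly independent over ℝ; hence {H₄, C, 𝓘₄} is a functionally independent set. -/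
noncomputable section

/-- Partial derivative of a real-valued function on ℝ⁴ in the `i`-th coordinate.
Coordinates: `x 0 = q₁`, `x 1 = q₂`, `x 2 = p₁`, `x 3 = p₂`. -/
def pdR (i : Fin 4) (f : (Fin 4 → ℝ) → ℝ) (x : Fin 4 → ℝ) : ℝ :=
  deriv (fun t => f (Function.update x i t)) (x i)

/-- The gradient `(∂f/∂q₁, ∂f/∂q₂, ∂f/∂p₁, ∂f/∂p₂) ∈ ℝ⁴`. -/
def grad (f : (Fin 4 → ℝ) → ℝ) (x : Fin 4 → ℝ) : Fin 4 → ℝ :=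
  fun i => pdR i f x

/-- The generalized classical Zernike Hamiltonian for `N = 4` with real parameters:
`H₄ = p₁² + p₂² + Σ_{n=1}^{4} γₙ (q₁p₁ + q₂p₂)ⁿ`. -/
def H4R (γ₁ γ₂ γ₃ γ₄ : ℝ) (x : Fin 4 → ℝ) : ℝ :=
  let q1 := x 0; let q2 := x 1; let p1 := x 2; let p2 := x 3
  let D := q1 * p1 + q2 * p2
  p1^2 + p2^2 + γ₁ * D + γ₂ * D^2 + γ₃ * D^3 + γ₄ * D^4

/-- The angular momentum `C = q₁p₂ − q₂p₁`. -/
def angMomR (x : Fin 4 → ℝ) : ℝ :=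
  x 0 * x 3 - x 1 * x 2

/-- The fourth-order constant of motion `𝓘₄` with real parameters. -/
def I4R (γ₁ γ₂ γ₃ γ₄ : ℝ) (x : Fin 4 → ℝ) : ℝ :=
  let q1 := x 0; let q2 := x 1; let p1 := x 2; let p2 := x 3
  p2^2 + γ₁ * (q2 * p2) + γ₂ * ((q1^2 + q2^2) * p2^2)
    + γ₃ * (q2^3 * p2^3 + (q1^3 + 3*q1*q2^2) * p2^2 * p1 - q2^3 * p2 * p1^2)
    + γ₄ * ((q2^4 - q1^4) * p2^4 + 4*(q1^3*q2 + q1*q2^3) * p2^3 * p1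
        + (q1^4 - q2^4) * p2^2 * p1^2)

/-!
On the fibre `q = 0` the functions `H₄`, `C` and `𝓘₄` restrict to `p₁² + p₂²`, `0` and `p₂²`,
whatever the parameters. So there the momentum parts of `∇H₄` and `∇𝓘₄` are independent as soon as
`p₁ p₂ ≠ 0`, while `∇C` has no momentum part but is nonzero: a linear relation between the
three gradients involves neither `∇H₄` nor `∇𝓘₄`, hence not `∇C` either.
-/

theorem linearIndependent_triple_of_map_pair {R V W : Type*} [Ring R] [IsDomain R]
    [AddCommGroup V] [Module R V] [Module.IsTorsionFree R V] [AddCommGroup W] [Module R W]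
    {π : V →ₗ[R] W} {u v w : V}
    (huw : LinearIndependent R ![π u, π w]) (hπv : π v = 0) (hv : v ≠ 0) :
    LinearIndependent R ![u, v, w] := by
  rw [LinearIndependent.pair_iff] at huw
  rw [Fintype.linearIndependent_iff]
  intro c hc
  have hsum : c 0 • u + c 1 • v + c 2 • w = 0 := by
    rwa [Fin.sum_univ_three] at hc
  obtain ⟨hc₀, hc₂⟩ : c 0 = 0 ∧ c 2 = 0 := huw _ _ <| by
    simpa only [map_add, map_smul, hπv, smul_zero, add_zero, map_zero] using congrArg π hsum
  have hc₁ : c 1 = 0 := by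
    have hcv : c 1 • v = 0 := by
      simpa only [hc₀, hc₂, zero_smul, zero_add, add_zero] using hsum
    exact (smul_eq_zero.mp hcv).resolve_right hv
  exact Fin.forall_fin_succ.mpr ⟨hc₀, Fin.forall_fin_two.mpr ⟨hc₁, hc₂⟩⟩

/-- The projection `(q₁, q₂, p₁, p₂) ↦ (p₁, p₂)`; applied to a gradient, it extracts the partial
derivatives in the momenta. -/
def momentumPart : (Fin 4 → ℝ) →ₗ[ℝ] (Fin 2 → ℝ) :=
  LinearMap.funLeft ℝ ℝ ![2, 3]

theorem momentumPart_grad (f : (Fin 4 → ℝ) → ℝ) (q₁ q₂ p₁ p₂ : ℝ) :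
    momentumPart (grad f ![q₁, q₂, p₁, p₂]) =
      ![deriv (fun t => f ![q₁, q₂, t, p₂]) p₁, deriv (fun t => f ![q₁, q₂, p₁, t]) p₂] := by
  have update_p₁ (t : ℝ) : Function.update ![q₁, q₂, p₁, p₂] 2 t = ![q₁, q₂, t, p₂] := by
    ext i; fin_cases i <;> rfl
  have update_p₂ (t : ℝ) : Function.update ![q₁, q₂, p₁, p₂] 3 t = ![q₁, q₂, p₁, t] := by
    ext i; fin_cases i <;> rfl
  ext i
  fin_cases i
  · simp [momentumPart, grad, pdR, update_p₁]
  · simp [momentumPart, grad, pdR, update_p₂]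

theorem H4R_zero_position (γ₁ γ₂ γ₃ γ₄ p₁ p₂ : ℝ) :
    H4R γ₁ γ₂ γ₃ γ₄ ![0, 0, p₁, p₂] = p₁ ^ 2 + p₂ ^ 2 := by
  simp [H4R]

theorem angMomR_zero_position (p₁ p₂ : ℝ) : angMomR ![0, 0, p₁, p₂] = 0 := by
  simp [angMomR]

theorem I4R_zero_position (γ₁ γ₂ γ₃ γ₄ p₁ p₂ : ℝ) :
    I4R γ₁ γ₂ γ₃ γ₄ ![0, 0, p₁, p₂] = p₂ ^ 2 := by
  simp [I4R]

theorem grad_angMomR (x : Fin 4 → ℝ) : grad angMomR x = ![x 3, -x 2, -x 1, x 0] := by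
  ext i
  fin_cases i <;> simp [grad, pdR, angMomR, Function.update]

theorem linearIndependent_grad_zero_position (γ₁ γ₂ γ₃ γ₄ : ℝ) {p₁ p₂ : ℝ}
    (hp₁ : p₁ ≠ 0) (hp₂ : p₂ ≠ 0) :
    LinearIndependent ℝ
      ![grad (H4R γ₁ γ₂ γ₃ γ₄) ![0, 0, p₁, p₂], grad angMomR ![0, 0, p₁, p₂],
        grad (I4R γ₁ γ₂ γ₃ γ₄) ![0, 0, p₁, p₂]] := by
  have hH : momentumPart (grad (H4R γ₁ γ₂ γ₃ γ₄) ![0, 0, p₁, p₂]) = ![2 * p₁, 2 * p₂] := by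
    simp [momentumPart_grad, H4R_zero_position]
  have hC : momentumPart (grad angMomR ![0, 0, p₁, p₂]) = 0 := by
    simp [momentumPart_grad, angMomR_zero_position]
  have hI : momentumPart (grad (I4R γ₁ γ₂ γ₃ γ₄) ![0, 0, p₁, p₂]) = ![0, 2 * p₂] := by
    simp [momentumPart_grad, I4R_zero_position]
  have hC_ne : grad angMomR ![0, 0, p₁, p₂] ≠ 0 := fun h =>
    hp₂ <| by simpa [grad_angMomR] using congrFun h 0
  refine linearIndependent_triple_of_map_pair ?_ hC hC_ne
  rw [hH, hI]
  have hdet : (!![2 * p₁, 2 * p₂; 0, 2 * p₂]).det ≠ 0 := by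
    simp [Matrix.det_fin_two_of, hp₁, hp₂]
  exact Matrix.linearIndependent_rows_of_det_ne_zero hdet

/-- For all real parameters `γ₁,γ₂,γ₃,γ₄` there is a point of ℝ⁴ at which the
gradients of `H₄`, `C` and `𝓘₄` are linearly independent over ℝ; hence
`{H₄, C, 𝓘₄}` is a functionally independent set. -/
theorem H4_C_I4_functionally_independent (γ₁ γ₂ γ₃ γ₄ : ℝ) :
    ∃ x : Fin 4 → ℝ,
      LinearIndependent ℝ
        ![grad (H4R γ₁ γ₂ γ₃ γ₄) x, grad angMomR x, grad (I4R γ₁ γ₂ γ₃ γ₄) x] := by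
  exact ⟨![0, 0, 1, 1],
    linearIndependent_grad_zero_position γ₁ γ₂ γ₃ γ₄ one_ne_zero one_ne_zero⟩
end
end

section
/- For all complex parameters γ₁,γ₂,γ₃,γ₄, define L₁ = C/2, L₂ = (𝓘₄' − 𝓘₄)/2 and L₃ = {L₁, L₂}. Then {L₁, L₃} = −L₂ identically on ℝ⁴. -/
noncomputable section

/-- Partial derivative of a complex-valued function on ℝ⁴ in the `i`-th coordinate.
Coordinates: `x 0 = q₁`, `x 1 = q₂`, `x 2 = p₁`, `x 3 = p₂`. -/
def pd (i : Fin 4) (f : (Fin 4 → ℝ) → ℂ) (x : Fin 4 → ℝ) : ℂ :=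
  deriv (fun t => f (Function.update x i t)) (x i)

/-- Canonical Poisson bracket on ℝ⁴:
`{f,g} = Σᵢ (∂f/∂qᵢ ∂g/∂pᵢ − ∂f/∂pᵢ ∂g/∂qᵢ)`. -/
def poisson (f g : (Fin 4 → ℝ) → ℂ) (x : Fin 4 → ℝ) : ℂ :=
  (pd 0 f x * pd 2 g x - pd 2 f x * pd 0 g x)
    + (pd 1 f x * pd 3 g x - pd 3 f x * pd 1 g x)

/-- The angular momentum `C = q₁p₂ − q₂p₁`. -/
def angMom (x : Fin 4 → ℝ) : ℂ :=
  ((x 0 * x 3 - x 1 * x 2 : ℝ) : ℂ)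

/-- The fourth-order constant of motion `𝓘₄`. -/
def I4 (γ₁ γ₂ γ₃ γ₄ : ℂ) (x : Fin 4 → ℝ) : ℂ :=
  let q1 : ℂ := (x 0 : ℝ); let q2 : ℂ := (x 1 : ℝ)
  let p1 : ℂ := (x 2 : ℝ); let p2 : ℂ := (x 3 : ℝ)
  p2^2 + γ₁ * (q2 * p2) + γ₂ * ((q1^2 + q2^2) * p2^2)
    + γ₃ * (q2^3 * p2^3 + (q1^3 + 3*q1*q2^2) * p2^2 * p1 - q2^3 * p2 * p1^2)
    + γ₄ * ((q2^4 - q1^4) * p2^4 + 4*(q1^3*q2 + q1*q2^3) * p2^3 * p1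
        + (q1^4 - q2^4) * p2^2 * p1^2)

/-- `𝓘₄'`: obtained from `𝓘₄` by the interchange `(q₁,p₁) ↔ (q₂,p₂)`. -/
def I4' (γ₁ γ₂ γ₃ γ₄ : ℂ) (x : Fin 4 → ℝ) : ℂ :=
  I4 γ₁ γ₂ γ₃ γ₄ ![x 1, x 0, x 3, x 2]

/-- `L₁ = C/2`. -/
def L1 (x : Fin 4 → ℝ) : ℂ := angMom x / 2

/-- `L₂ = (𝓘₄' − 𝓘₄)/2`. -/
def L2 (γ₁ γ₂ γ₃ γ₄ : ℂ) (x : Fin 4 → ℝ) : ℂ :=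
  (I4' γ₁ γ₂ γ₃ γ₄ x - I4 γ₁ γ₂ γ₃ γ₄ x) / 2

/-- `L₃ = {L₁, L₂}`. -/
def L3 (γ₁ γ₂ γ₃ γ₄ : ℂ) (x : Fin 4 → ℝ) : ℂ :=
  poisson L1 (L2 γ₁ γ₂ γ₃ γ₄) x

/-!
The operator `{L₁, ·}` is half the infinitesimal rotation acting simultaneously on the position and
momentum planes. It is a derivation diagonalised by the monomials in `q₁ ± i q₂` and `p₁ ± i p₂`:
if `s² = -1`, then `q₁ + s q₂` and `p₁ + s p₂` both have eigenvalue `-s/2`. In these coordinates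
`L₂` contains only monomials of angular weight `±2`, hence is a sum of two eigenfunctions with
eigenvalues `∓i`, and `{L₁, ·}` squares to `(∓i)² = -1` on it.
-/

section PoissonDerivation

variable {H f g : (Fin 4 → ℝ) → ℂ} {x : Fin 4 → ℝ}

theorem pd_eq_fderiv (i : Fin 4) (hf : DifferentiableAt ℝ f x) :
    pd i f x = fderiv ℝ f x (Pi.single i 1) := by
  have hf' : HasFDerivAt f (fderiv ℝ f x) (Function.update x i (x i)) := by
    simpa only [Function.update_eq_self] using hf.hasFDerivAt
  exact (hf'.comp_hasDerivAt (x i) (hasDerivAt_update x i (x i))).deriv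

theorem poisson_add_right (hf : DifferentiableAt ℝ f x) (hg : DifferentiableAt ℝ g x) :
    poisson H (f + g) x = poisson H f x + poisson H g x := by
  simp only [poisson, pd_eq_fderiv _ hf, pd_eq_fderiv _ hg, pd_eq_fderiv _ (hf.add hg),
    fderiv_add hf hg, add_apply]
  ring

theorem poisson_smul_right (a : ℂ) (hf : DifferentiableAt ℝ f x) :
    poisson H (a • f) x = a * poisson H f x := by
  simp only [poisson, pd_eq_fderiv _ hf, pd_eq_fderiv _ (hf.const_smul a),
    fderiv_const_smul hf, smul_apply, smul_eq_mul]
  ring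

theorem poisson_mul_right (hf : DifferentiableAt ℝ f x) (hg : DifferentiableAt ℝ g x) :
    poisson H (f * g) x = poisson H f x * g x + f x * poisson H g x := by
  simp only [poisson, pd_eq_fderiv _ hf, pd_eq_fderiv _ hg, pd_eq_fderiv _ (hf.mul hg),
    fderiv_mul hf hg, add_apply, smul_apply, smul_eq_mul]
  ring

theorem poisson_const_right (a : ℂ) : poisson H (fun _ ↦ a) x = 0 := by
  simp only [poisson, pd, deriv_const, mul_zero, sub_zero, add_zero]

end PoissonDerivation

/-- The eigenspace of the operator `{H, ·}` on differentiable functions, for the eigenvalue `c`. -/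
def poissonEigenspace (H : (Fin 4 → ℝ) → ℂ) (c : ℂ) : Submodule ℂ ((Fin 4 → ℝ) → ℂ) where
  carrier := {f | Differentiable ℝ f ∧ ∀ x, poisson H f x = c * f x}
  zero_mem' := ⟨differentiable_const 0, fun _ ↦ (poisson_const_right 0).trans (mul_zero c).symm⟩
  add_mem' := by
    rintro f g ⟨hf, hHf⟩ ⟨hg, hHg⟩
    refine ⟨hf.add hg, fun x ↦ ?_⟩
    rw [poisson_add_right (hf x) (hg x), hHf, hHg, Pi.add_apply, mul_add]
  smul_mem' := by
    rintro a f ⟨hf, hHf⟩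
    refine ⟨hf.const_smul a, fun x ↦ ?_⟩
    rw [poisson_smul_right a (hf x), hHf, Pi.smul_apply, smul_eq_mul, mul_left_comm]

namespace poissonEigenspace

variable {H f g : (Fin 4 → ℝ) → ℂ} {c d : ℂ}

instance gradedMonoid : SetLike.GradedMonoid (poissonEigenspace H) where
  one_mem := ⟨differentiable_const 1, fun _ ↦ (poisson_const_right 1).trans (zero_mul _).symm⟩
  mul_mem := by
    rintro c d f g ⟨hf, hHf⟩ ⟨hg, hHg⟩
    refine ⟨hf.mul hg, fun x ↦ ?_⟩
    rw [poisson_mul_right (hf x) (hg x), hHf, hHg, Pi.mul_apply]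
    ring

theorem add_smul_mem_of_poisson_eq {a s : ℂ} (hf : Differentiable ℝ f) (hg : Differentiable ℝ g)
    (hHf : ∀ x, poisson H f x = a * g x) (hHg : ∀ x, poisson H g x = -(a * f x))
    (hs : s ^ 2 = -1) : f + s • g ∈ poissonEigenspace H (-(s * a)) := by
  refine ⟨hf.add (hg.const_smul s), fun x ↦ ?_⟩
  rw [poisson_add_right (hf x) ((hg x).const_smul s), poisson_smul_right s (hg x), hHf, hHg,
    Pi.add_apply, Pi.smul_apply, smul_eq_mul]
  linear_combination a * g x * hs

theorem poisson_add (hf : f ∈ poissonEigenspace H c) (hg : g ∈ poissonEigenspace H d) :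
    poisson H (f + g) = c • f + d • g := by
  funext x
  rw [poisson_add_right (hf.1 x) (hg.1 x), hf.2, hg.2]
  rfl

theorem poisson_poisson_add (hf : f ∈ poissonEigenspace H c) (hg : g ∈ poissonEigenspace H d) :
    poisson H (poisson H (f + g)) = c ^ 2 • f + d ^ 2 • g := by
  rw [poisson_add hf hg, poisson_add (Submodule.smul_mem _ c hf) (Submodule.smul_mem _ d hg),
    smul_smul, smul_smul, ← sq, ← sq]

end poissonEigenspace

section Rotation

/-- The coordinate `x j` as a complex-valued observable. -/
def coord (j : Fin 4) (x : Fin 4 → ℝ) : ℂ := x j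

theorem hasFDerivAt_coord (j : Fin 4) (x : Fin 4 → ℝ) :
    HasFDerivAt (coord j)
      (Complex.ofRealCLM ∘L (ContinuousLinearMap.proj j : (Fin 4 → ℝ) →L[ℝ] ℝ)) x :=
  Complex.ofRealCLM.hasFDerivAt.comp x (hasFDerivAt_apply j x)

theorem differentiable_coord (j : Fin 4) : Differentiable ℝ (coord j) :=
  fun x ↦ (hasFDerivAt_coord j x).differentiableAt

theorem pd_coord (i j : Fin 4) (x : Fin 4 → ℝ) : pd i (coord j) x = if j = i then 1 else 0 := by
  rw [pd_eq_fderiv i (differentiable_coord j x), (hasFDerivAt_coord j x).fderiv]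
  simp [Pi.single_apply, apply_ite]

theorem poisson_L1 (f : (Fin 4 → ℝ) → ℂ) (x : Fin 4 → ℝ) :
    poisson L1 f x =
      (x 1 * pd 0 f x - x 0 * pd 1 f x + x 3 * pd 2 f x - x 2 * pd 3 f x) / 2 := by
  have deriv_ofReal (t : ℝ) : deriv Complex.ofReal t = 1 := Complex.ofRealCLM.hasDerivAt.deriv
  have pd_L1 (i : Fin 4) : pd i L1 x = ![(x 3 : ℂ) / 2, -x 2 / 2, -x 1 / 2, x 0 / 2] i := by
    fin_cases i <;> simp [pd, L1, angMom, deriv_ofReal]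
  simp only [poisson, pd_L1, Matrix.cons_val]
  ring

/-- The complex coordinate `q₁ + s q₂` on the position plane, of interest for `s = ±i`. -/
def complexPos (s : ℂ) : (Fin 4 → ℝ) → ℂ := coord 0 + s • coord 1

/-- The complex coordinate `p₁ + s p₂` on the momentum plane, of interest for `s = ±i`. -/
def complexMom (s : ℂ) : (Fin 4 → ℝ) → ℂ := coord 2 + s • coord 3

variable {s : ℂ}

theorem complexPos_mem_poissonEigenspace (hs : s ^ 2 = -1) :
    complexPos s ∈ poissonEigenspace L1 (-(s / 2)) := by
  rw [div_eq_mul_inv]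
  refine poissonEigenspace.add_smul_mem_of_poisson_eq (differentiable_coord 0)
    (differentiable_coord 1) (fun x ↦ ?_) (fun x ↦ ?_) hs <;>
  · simp only [poisson_L1, pd_coord, coord, Fin.reduceEq, ↓reduceIte]
    ring

theorem complexMom_mem_poissonEigenspace (hs : s ^ 2 = -1) :
    complexMom s ∈ poissonEigenspace L1 (-(s / 2)) := by
  rw [div_eq_mul_inv]
  refine poissonEigenspace.add_smul_mem_of_poisson_eq (differentiable_coord 2)
    (differentiable_coord 3) (fun x ↦ ?_) (fun x ↦ ?_) hs <;>
  · simp only [poisson_L1, pd_coord, coord, Fin.reduceEq, ↓reduceIte]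
    ring

/-- The monomial `z ^ a * z̄ ^ b * w ^ c * w̄ ^ d` in `z = q₁ + s q₂` and `w = p₁ + s p₂`, where the
bar replaces `s` by `-s`. For `s = ±i` it is an eigenfunction of `{C, ·}`, with eigenvalue
`-s * (a - b + c - d)`. -/
def rotationMonomial (s : ℂ) (a b c d : ℕ) : (Fin 4 → ℝ) → ℂ :=
  complexPos s ^ a * complexPos (-s) ^ b * complexMom s ^ c * complexMom (-s) ^ d

theorem rotationMonomial_mem_poissonEigenspace (hs : s ^ 2 = -1) (a b c d : ℕ) :
    rotationMonomial s a b c d ∈ poissonEigenspace L1 (-((a - b + c - d) * s / 2)) := by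
  have hs' : (-s) ^ 2 = -1 := (neg_sq s).trans hs
  have eigenvalue_eq : -((a - b + c - d) * s / 2)
      = a • -(s / 2) + b • -(-s / 2) + c • -(s / 2) + d • -(-s / 2) := by
    simp only [nsmul_eq_mul]
    ring
  rw [eigenvalue_eq]
  exact SetLike.mul_mem_graded (SetLike.mul_mem_graded (SetLike.mul_mem_graded
    (SetLike.pow_mem_graded a (complexPos_mem_poissonEigenspace hs))
    (SetLike.pow_mem_graded b (complexPos_mem_poissonEigenspace hs')))
    (SetLike.pow_mem_graded c (complexMom_mem_poissonEigenspace hs)))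
    (SetLike.pow_mem_graded d (complexMom_mem_poissonEigenspace hs'))

/-- The part of `L₂` of angular weight `2` (for `s = i`) or `-2` (for `s = -i`), obtained by
substituting `q₁ = (z + z̄) / 2`, `q₂ = (z - z̄) / (2 s)`, `p₁ = (w + w̄) / 2`,
`p₂ = (w - w̄) / (2 s)` into `L₂`. -/
def L2Part (γ₁ γ₂ γ₃ γ₄ s : ℂ) : (Fin 4 → ℝ) → ℂ :=
  (1 / 4 : ℂ) • (rotationMonomial s 0 0 2 0
    + γ₁ • rotationMonomial s 1 0 1 0
    + γ₂ • rotationMonomial s 1 1 2 0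
    + (γ₃ / 4) • (rotationMonomial s 3 0 1 2 + (3 : ℂ) • rotationMonomial s 1 2 3 0)
    + (γ₄ / 2) • (rotationMonomial s 1 3 4 0 + rotationMonomial s 3 1 2 2))

theorem L2Part_mem_poissonEigenspace (γ₁ γ₂ γ₃ γ₄ : ℂ) (hs : s ^ 2 = -1) :
    L2Part γ₁ γ₂ γ₃ γ₄ s ∈ poissonEigenspace L1 (-s) := by
  have weight_two (a b c d : ℕ) (h : a + c = b + d + 2) :
      rotationMonomial s a b c d ∈ poissonEigenspace L1 (-s) := by
    convert rotationMonomial_mem_poissonEigenspace hs a b c d using 2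
    have : (a : ℂ) + c = b + d + 2 := mod_cast h
    linear_combination (s / 2) * this
  unfold L2Part
  apply_rules [Submodule.smul_mem, Submodule.add_mem, weight_two]

theorem L2_eq_L2Part_add (γ₁ γ₂ γ₃ γ₄ : ℂ) :
    L2 γ₁ γ₂ γ₃ γ₄ = L2Part γ₁ γ₂ γ₃ γ₄ Complex.I + L2Part γ₁ γ₂ γ₃ γ₄ (-Complex.I) := by
  funext x
  have hI : Complex.I ^ 2 = -1 := Complex.I_sq
  simp only [L2, I4', I4, L2Part, rotationMonomial, complexPos, complexMom, coord,
    Matrix.cons_val, Pi.add_apply, Pi.mul_apply, Pi.pow_apply, Pi.smul_apply, smul_eq_mul]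
  grind

end Rotation

/-- `{L₁, L₃} = −L₂` identically on ℝ⁴. -/
theorem poisson_L1_L3 (γ₁ γ₂ γ₃ γ₄ : ℂ) :
    ∀ x : Fin 4 → ℝ, poisson L1 (L3 γ₁ γ₂ γ₃ γ₄) x = -(L2 γ₁ γ₂ γ₃ γ₄ x) := by
  intro x
  have hpos := L2Part_mem_poissonEigenspace γ₁ γ₂ γ₃ γ₄ Complex.I_sq
  have hneg := L2Part_mem_poissonEigenspace γ₁ γ₂ γ₃ γ₄ ((neg_sq Complex.I).trans Complex.I_sq)
  have L3_eq : L3 γ₁ γ₂ γ₃ γ₄ = poisson L1 (L2 γ₁ γ₂ γ₃ γ₄) := rfl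
  rw [L3_eq, L2_eq_L2Part_add, poissonEigenspace.poisson_poisson_add hpos hneg, neg_neg,
    neg_sq, Complex.I_sq, ← smul_add, neg_one_smul, Pi.neg_apply]
end
end

section
/- For every N ∈ ℕ with N ≥ 1 and all complex parameters γ₁,…,γ_N, the generalized quantum Zernike Hamiltonian Ĥ_N = p̂₁² + p̂₂² + Σ_{n=1}^{N} γₙ D̂ⁿ commutes with the quantum angular momentum Ĉ = q̂₁p̂₂ − q̂₂p̂₁: for every smooth function ψ : ℝ² → ℂ one has Ĥ_N(Ĉψ) = Ĉ(Ĥ_Nψ). -/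
noncomputable section

/-- Wavefunctions on the plane. -/
abbrev WF := (ℝ × ℝ) → ℂ

/-- Operators acting on wavefunctions. -/
abbrev Op := WF → WF

/-- Position operator `q̂₁`: multiplication by `q₁`. -/
def q1op : Op := fun ψ x => (x.1 : ℂ) * ψ x

/-- Position operator `q̂₂`: multiplication by `q₂`. -/
def q2op : Op := fun ψ x => (x.2 : ℂ) * ψ x

/-- Momentum operator `p̂₁ = −i ∂/∂q₁`. -/
def p1op : Op := fun ψ x => -Complex.I * deriv (fun t => ψ (t, x.2)) x.1

/-- Momentum operator `p̂₂ = −i ∂/∂q₂`. -/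
def p2op : Op := fun ψ x => -Complex.I * deriv (fun t => ψ (x.1, t)) x.2

/-- The dilation operator `D̂ = q̂₁p̂₁ + q̂₂p̂₂`. -/
def Dop : Op := q1op ∘ p1op + q2op ∘ p2op

/-- The quantum angular momentum `Ĉ = q̂₁p̂₂ − q̂₂p̂₁`. -/
def Cop : Op := q1op ∘ p2op - q2op ∘ p1op

/-- The generalized quantum Zernike Hamiltonian
`Ĥ_N = p̂₁² + p̂₂² + Σ_{n=1}^{N} γₙ D̂ⁿ`. -/
def HNop (N : ℕ) (γ : ℕ → ℂ) : Op :=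
  p1op ∘ p1op + p2op ∘ p2op + ∑ n ∈ Finset.Icc 1 N, γ n • Dop^[n]

/-!
In any associative algebra with canonical pairs `[qᵢ, pⱼ] = δᵢⱼ c`, bracketing with the
angular momentum `L = qᵢ pⱼ - qⱼ pᵢ` is an infinitesimal rotation of the `(i, j)`-plane, applied
simultaneously to the `q`s and to the `p`s. The invariant forms `∑ pₖ ^ 2` and `∑ qₖ pₖ` are
therefore killed by it, and with `∑ qₖ pₖ` all of its powers. The operators of the theorem are not
linear on arbitrary functions, since `deriv` is not, but they restrict to endomorphisms of the
space of smooth functions, and these form canonical pairs with `c = i`.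
-/

open scoped ContDiff

/-- The canonical commutation relations for positions `q i` and momenta `p i` in an `R`-algebra,
with a scalar `c` in the role of `iħ`. -/
structure IsCanonical {R A ι : Type*} [CommRing R] [Ring A] [Algebra R A] [DecidableEq ι]
    (c : R) (q p : ι → A) : Prop where
  commute_position (i j : ι) : Commute (q i) (q j)
  commute_momentum (i j : ι) : Commute (p i) (p j)
  lie_position_momentum (i j : ι) : ⁅q i, p j⁆ = if i = j then c • 1 else 0

section Leibniz

variable {A : Type*} [NonUnitalRing A]

theorem lie_mul (a b c : A) : ⁅a, b * c⁆ = ⁅a, b⁆ * c + b * ⁅a, c⁆ := by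
  simp only [Ring.lie_def, sub_mul, mul_sub, mul_assoc]
  abel

theorem mul_lie (a b c : A) : ⁅a * b, c⁆ = ⁅a, c⁆ * b + a * ⁅b, c⁆ := by
  simp only [Ring.lie_def, sub_mul, mul_sub, mul_assoc]
  abel

end Leibniz

section CanonicalPairs

variable {A ι : Type*} [Ring A]

attribute [local instance] LieRing.ofAssociativeRing

/-- The generator `qᵢ pⱼ - qⱼ pᵢ` of rotations in the `(i, j)`-plane. -/
def angularMomentum (q p : ι → A) (i j : ι) : A := q i * p j - q j * p i

/-- The generator `∑ qₖ pₖ` of dilations, with the positions to the left of the momenta. -/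
def dilation [Fintype ι] (q p : ι → A) : A := ∑ k, q k * p k

/-- The abstract form of the Hamiltonian `Ĥ_N`: the kinetic term `∑ pₖ ^ 2` plus a polynomial in
the dilation generator, whose exponents range over `s`. -/
def zernikeHamiltonian {R : Type*} [CommRing R] [Algebra R A] [Fintype ι]
    (s : Finset ℕ) (γ : ℕ → R) (q p : ι → A) : A :=
  ∑ k, p k ^ 2 + ∑ n ∈ s, γ n • dilation q p ^ n

namespace IsCanonical

variable {R : Type*} [CommRing R] [Algebra R A] [DecidableEq ι] {c : R} {q p : ι → A}

theorem lie_momentum_position (h : IsCanonical c q p) (i j : ι) :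
    ⁅p i, q j⁆ = if j = i then -(c • (1 : A)) else 0 := by
  rw [← lie_skew, h.lie_position_momentum]
  split_ifs <;> simp

theorem lie_angularMomentum_momentum (h : IsCanonical c q p) (i j k : ι) :
    ⁅angularMomentum q p i j, p k⁆ =
      (if i = k then c • p j else 0) - (if j = k then c • p i else 0) := by
  simp [angularMomentum, mul_lie, (h.commute_momentum _ _).lie_eq, h.lie_position_momentum]

theorem lie_angularMomentum_position (h : IsCanonical c q p) (i j k : ι) :
    ⁅angularMomentum q p i j, q k⁆ =
      (if i = k then c • q j else 0) - (if j = k then c • q i else 0) := by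
  simp only [angularMomentum, sub_lie, mul_lie, (h.commute_position _ _).lie_eq,
    h.lie_momentum_position, eq_comm (a := k)]
  split_ifs <;> simp [neg_add_eq_sub]

variable [Fintype ι]

theorem commute_angularMomentum_sum_momentum_sq (h : IsCanonical c q p) (i j : ι) :
    Commute (angularMomentum q p i j) (∑ k, p k ^ 2) := by
  rw [commute_iff_lie_eq]
  calc ⁅angularMomentum q p i j, ∑ k, p k ^ 2⁆
      = ∑ k, (⁅angularMomentum q p i j, p k⁆ * p k + p k * ⁅angularMomentum q p i j, p k⁆) := by
        simp only [lie_sum, sq, lie_mul]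
    _ = (c • (p j * p i) - c • (p i * p j)) + (c • (p i * p j) - c • (p j * p i)) := by
        simp [h.lie_angularMomentum_momentum, sub_mul, mul_sub, Finset.sum_add_distrib]
    _ = 0 := by abel

theorem commute_angularMomentum_dilation (h : IsCanonical c q p) (i j : ι) :
    Commute (angularMomentum q p i j) (dilation q p) := by
  rw [commute_iff_lie_eq]
  calc ⁅angularMomentum q p i j, dilation q p⁆
      = ∑ k, (⁅angularMomentum q p i j, q k⁆ * p k + q k * ⁅angularMomentum q p i j, p k⁆) := by
        simp only [dilation, lie_sum, lie_mul]
    _ = (c • (q j * p i) - c • (q i * p j)) + (c • (q i * p j) - c • (q j * p i)) := by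
        simp [h.lie_angularMomentum_momentum, h.lie_angularMomentum_position, sub_mul, mul_sub,
          Finset.sum_add_distrib]
    _ = 0 := by abel

theorem commute_angularMomentum_zernikeHamiltonian (h : IsCanonical c q p) (i j : ι)
    (s : Finset ℕ) (γ : ℕ → R) :
    Commute (angularMomentum q p i j) (zernikeHamiltonian s γ q p) :=
  (h.commute_angularMomentum_sum_momentum_sq i j).add_right <| Commute.sum_right _ _ _ fun n _ =>
    ((h.commute_angularMomentum_dilation i j).pow_right n).smul_right (γ n)

end IsCanonical

end CanonicalPairs

section SmoothFunctions

variable {E : Type*} [NormedAddCommGroup E] [NormedSpace ℝ E]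

variable (E) in
/-- The space of smooth complex-valued functions on `E`, the common invariant domain of the
operators below. -/
def smoothFunctions : Submodule ℂ (E → ℂ) where
  carrier := {ψ | ContDiff ℝ ∞ ψ}
  add_mem' {φ ψ} (hφ : ContDiff ℝ ∞ φ) (hψ : ContDiff ℝ ∞ ψ) := show ContDiff ℝ ∞ _ from hφ.add hψ
  zero_mem' := show ContDiff ℝ ∞ _ from contDiff_const
  smul_mem' c ψ (hψ : ContDiff ℝ ∞ ψ) := show ContDiff ℝ ∞ _ from hψ.const_smul c

theorem mem_smoothFunctions {ψ : E → ℂ} : ψ ∈ smoothFunctions E ↔ ContDiff ℝ ∞ ψ := Iff.rfl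

theorem smoothFunctions.contDiff (ψ : smoothFunctions E) : ContDiff ℝ ∞ (ψ : E → ℂ) := ψ.2

theorem smoothFunctions.differentiable (ψ : smoothFunctions E) : Differentiable ℝ (ψ : E → ℂ) :=
  (smoothFunctions.contDiff ψ).differentiable (by simp)

theorem smoothFunctions.contDiff_fderiv (ψ : smoothFunctions E) :
    ContDiff ℝ ∞ (fderiv ℝ (ψ : E → ℂ)) :=
  (smoothFunctions.contDiff ψ).fderiv_right (by simp)

/-- Multiplication by the real linear coordinate `ℓ`. -/
def position (ℓ : E →L[ℝ] ℝ) : Module.End ℂ (smoothFunctions E) where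
  toFun ψ := ⟨fun x => (ℓ x : ℂ) * ψ.1 x,
    (Complex.ofRealCLM.contDiff.comp ℓ.contDiff).mul (smoothFunctions.contDiff ψ)⟩
  map_add' φ ψ := by ext x; exact mul_add _ _ _
  map_smul' c ψ := by ext x; exact mul_left_comm _ _ _

/-- The momentum operator `-i ∂ᵥ` in the direction `v`. -/
def momentum (v : E) : Module.End ℂ (smoothFunctions E) where
  toFun ψ := ⟨fun x => -Complex.I * fderiv ℝ ψ.1 x v,
    mem_smoothFunctions.mpr <|
      contDiff_const.mul ((smoothFunctions.contDiff_fderiv ψ).clm_apply contDiff_const)⟩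
  map_add' φ ψ := by
    ext x
    simp only [Submodule.coe_add, Pi.add_apply, AddMemClass.mk_add_mk, add_apply, mul_add,
      fderiv_add (smoothFunctions.differentiable φ x) (smoothFunctions.differentiable ψ x)]
  map_smul' c ψ := by
    ext x
    simp only [SetLike.val_smul, fderiv_const_smul (smoothFunctions.differentiable ψ x) c,
      smul_apply, RingHom.id_apply, SetLike.mk_smul_mk, Pi.smul_apply, mul_smul_comm]

theorem position_apply (ℓ : E →L[ℝ] ℝ) (ψ : smoothFunctions E) (x : E) :
    (position ℓ ψ : E → ℂ) x = ℓ x * (ψ : E → ℂ) x := rfl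

theorem momentum_apply (v : E) (ψ : smoothFunctions E) (x : E) :
    (momentum v ψ : E → ℂ) x = -Complex.I * fderiv ℝ (ψ : E → ℂ) x v := rfl

theorem momentum_apply_eq_deriv {v : E} {u : ℝ → E} {t : ℝ} (hu : HasDerivAt u v t)
    (ψ : smoothFunctions E) :
    (momentum v ψ : E → ℂ) (u t) = -Complex.I * deriv (fun s => (ψ : E → ℂ) (u s)) t :=
  congrArg (-Complex.I * ·)
    ((smoothFunctions.differentiable ψ (u t)).hasFDerivAt.comp_hasDerivAt t hu).deriv.symm

theorem commute_position (ℓ m : E →L[ℝ] ℝ) : Commute (position ℓ) (position m) := by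
  ext ψ x
  exact mul_left_comm _ _ _

theorem fderiv_momentum_apply (v w : E) (ψ : smoothFunctions E) (x : E) :
    fderiv ℝ (momentum v ψ : E → ℂ) x w =
      -Complex.I * fderiv ℝ (fderiv ℝ (ψ : E → ℂ)) x w v := by
  have hψ : DifferentiableAt ℝ (fderiv ℝ (ψ : E → ℂ)) x :=
    (smoothFunctions.contDiff_fderiv ψ).differentiable (by simp) x
  have happly := hψ.hasFDerivAt.clm_apply (hasFDerivAt_const v x)
  simp [momentum, fderiv_const_mul happly.differentiableAt, happly.fderiv]

theorem commute_momentum (v w : E) : Commute (momentum v) (momentum w) := by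
  ext ψ x
  have hsymm : IsSymmSndFDerivAt ℝ (ψ : E → ℂ) x :=
    (smoothFunctions.contDiff ψ).contDiffAt.isSymmSndFDerivAt (by simp; norm_cast)
  simp only [Module.End.mul_apply, momentum_apply, fderiv_momentum_apply, hsymm.eq v w]

theorem fderiv_position_apply (ℓ : E →L[ℝ] ℝ) (v : E) (ψ : smoothFunctions E) (x : E) :
    fderiv ℝ (position ℓ ψ : E → ℂ) x v =
      ℓ x * fderiv ℝ (ψ : E → ℂ) x v + ℓ v * (ψ : E → ℂ) x := by
  have hℓ : HasFDerivAt (fun y => (ℓ y : ℂ)) (Complex.ofRealCLM ∘L ℓ) x :=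
    (Complex.ofRealCLM ∘L ℓ).hasFDerivAt
  have hmul := hℓ.mul (smoothFunctions.differentiable ψ x).hasFDerivAt
  refine (DFunLike.congr_fun hmul.fderiv v).trans ?_
  simp [mul_comm]

theorem lie_position_momentum (ℓ : E →L[ℝ] ℝ) (v : E) :
    ⁅position ℓ, momentum v⁆ = (Complex.I * ℓ v) • 1 := by
  ext ψ x
  simp only [Ring.lie_def, LinearMap.sub_apply, Module.End.mul_apply, AddSubgroupClass.coe_sub,
    Pi.sub_apply, LinearMap.smul_apply, Module.End.one_apply, SetLike.val_smul, Pi.smul_apply,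
    smul_eq_mul, position_apply, momentum_apply, fderiv_position_apply]
  ring

theorem isCanonical_position_momentum {ι : Type*} [DecidableEq ι] (ℓ : ι → E →L[ℝ] ℝ) (v : ι → E)
    (hdual : ∀ i j, ℓ i (v j) = if i = j then 1 else 0) :
    IsCanonical Complex.I (fun i => position (ℓ i)) (fun i => momentum (v i)) where
  commute_position _ _ := commute_position _ _
  commute_momentum _ _ := commute_momentum _ _
  lie_position_momentum i j := by
    rw [lie_position_momentum, hdual]
    split_ifs <;> simp

end SmoothFunctions

section Plane

/-- The position operators `q̂₁, q̂₂` on smooth wavefunctions. -/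
def planePosition : Fin 2 → Module.End ℂ (smoothFunctions (ℝ × ℝ)) :=
  fun i => position (![.fst ℝ ℝ ℝ, .snd ℝ ℝ ℝ] i)

/-- The momentum operators `p̂₁, p̂₂` on smooth wavefunctions. -/
def planeMomentum : Fin 2 → Module.End ℂ (smoothFunctions (ℝ × ℝ)) :=
  fun i => momentum (![(1, 0), (0, 1)] i)

theorem isCanonical_planePosition_planeMomentum :
    IsCanonical Complex.I planePosition planeMomentum :=
  isCanonical_position_momentum _ _ fun i j => by fin_cases i <;> fin_cases j <;> simp

variable (ψ : smoothFunctions (ℝ × ℝ))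

theorem q1op_coe : q1op ψ = planePosition 0 ψ := rfl

theorem q2op_coe : q2op ψ = planePosition 1 ψ := rfl

theorem p1op_coe : p1op ψ = planeMomentum 0 ψ := by
  funext x
  have hline : HasDerivAt (fun t : ℝ => (t, x.2)) (1, 0) x.1 :=
    (hasDerivAt_id x.1).prodMk (hasDerivAt_const x.1 x.2)
  exact (momentum_apply_eq_deriv hline ψ).symm

theorem p2op_coe : p2op ψ = planeMomentum 1 ψ := by
  funext x
  have hline : HasDerivAt (fun t : ℝ => (x.1, t)) (0, 1) x.2 :=
    (hasDerivAt_const x.2 x.1).prodMk (hasDerivAt_id x.2)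
  exact (momentum_apply_eq_deriv hline ψ).symm

theorem Cop_coe : Cop ψ = angularMomentum planePosition planeMomentum 0 1 ψ := by
  simp [Cop, angularMomentum, p1op_coe, p2op_coe, q1op_coe, q2op_coe]

theorem Dop_coe : Dop ψ = dilation planePosition planeMomentum ψ := by
  simp [Dop, dilation, p1op_coe, p2op_coe, q1op_coe, q2op_coe]

theorem iterate_Dop_coe (n : ℕ) :
    Dop^[n] ψ = (dilation planePosition planeMomentum ^ n) ψ := by
  rw [Module.End.pow_apply]
  exact (Function.Semiconj.iterate_right (f := ((↑) : smoothFunctions (ℝ × ℝ) → WF))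
    (fun φ => (Dop_coe φ).symm) n ψ).symm

theorem HNop_coe (N : ℕ) (γ : ℕ → ℂ) :
    HNop N γ ψ = zernikeHamiltonian (Finset.Icc 1 N) γ planePosition planeMomentum ψ := by
  simp [HNop, zernikeHamiltonian, p1op_coe, p2op_coe, iterate_Dop_coe, sq]

end Plane

/-- For every `N ≥ 1` and all complex parameters `γ₁, …, γ_N`, the generalized
quantum Zernike Hamiltonian commutes with the quantum angular momentum on
smooth functions: `Ĥ_N(Ĉψ) = Ĉ(Ĥ_Nψ)`. -/
theorem HNop_commutes_Cop (N : ℕ) (hN : 1 ≤ N) (γ : ℕ → ℂ)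
    (ψ : WF) (hψ : ContDiff ℝ (⊤ : ℕ∞) ψ) :
    HNop N γ (Cop ψ) = Cop (HNop N γ ψ) := by
  lift ψ to smoothFunctions (ℝ × ℝ) using mem_smoothFunctions.mpr hψ
  have hcomm := isCanonical_planePosition_planeMomentum.commute_angularMomentum_zernikeHamiltonian
    0 1 (Finset.Icc 1 N) γ
  rw [Cop_coe, HNop_coe, HNop_coe, Cop_coe, ← Module.End.mul_apply, ← Module.End.mul_apply,
    hcomm.eq]
end
end
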